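/- arXiv:1507.06132 — 5 statements merged into one kernel-verified Lean document; each statement's English description precedes it below -/
import Mathlib

section
/- Let P ⊂ ℝ^n be a compact polytope with nonempty interior given by a non-redundant description with pairwise distinct primitive normal vectors v_1, …, v_m ∈ ℤ^n spanning ℝ^n, and let u be a point of the interior of P. Then the following are equivalent: (i) for every nonzero lattice vector w ∈ ℤ^n, u belongs to Trop(P, w); (ii) for every primitive lattice vector w ∈ ℤ^n that is orthogonal to some primary subspace for P, u belongs to Trop(P, w). -/
open scoped Classical

noncomputable section

/-- Integer inner product `⟨w, v⟩ = ∑ i, w i * v i` on `ℤ^n`. -/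
def zdot {n : ℕ} (w v : Fin n → ℤ) : ℤ := ∑ i, w i * v i

/-- A lattice vector is primitive if the gcd of its entries is `1`. -/
def Primitive {n : ℕ} (w : Fin n → ℤ) : Prop := Finset.univ.gcd w = 1

/-- The affine function `l_j(u) = ⟨u, v_j⟩ - λ_j`. -/
def lf {n m : ℕ} (v : Fin m → Fin n → ℤ) (lam : Fin m → ℝ) (j : Fin m) (u : Fin n → ℝ) : ℝ :=
  (∑ i, u i * (v j i : ℝ)) - lam j

/-- The polytope `P = {u : l_j(u) ≥ 0 for all j}`. -/
def Pset {n m : ℕ} (v : Fin m → Fin n → ℤ) (lam : Fin m → ℝ) : Set (Fin n → ℝ) :=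
  {u | ∀ j, 0 ≤ lf v lam j u}

/-- The tropicalization of `P` relative to the lattice vector `w`: the set of points at which
the minimum of `{l_j(u) : ⟨w, v_j⟩ ≠ 0}` is attained by at least two distinct indices. -/
def TropRel {n m : ℕ} (v : Fin m → Fin n → ℤ) (lam : Fin m → ℝ) (w : Fin n → ℤ) :
    Set (Fin n → ℝ) :=
  {u | ∃ j₁ j₂ : Fin m, j₁ ≠ j₂ ∧ zdot w (v j₁) ≠ 0 ∧ zdot w (v j₂) ≠ 0 ∧
        lf v lam j₁ u = lf v lam j₂ u ∧
        ∀ j : Fin m, zdot w (v j) ≠ 0 → lf v lam j₁ u ≤ lf v lam j u}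

/-- A primary subspace for `P`: an `(n-1)`-dimensional subspace of `ℝ^n` spanned by a subset
of the facet normal vectors `v_j`. -/
def IsPrimary {n m : ℕ} (v : Fin m → Fin n → ℤ) (V : Submodule ℝ (Fin n → ℝ)) : Prop :=
  Module.finrank ℝ ↥V = n - 1 ∧
  ∃ S : Set (Fin m), V = Submodule.span ℝ ((fun j => fun i => ((v j i : ℝ))) '' S)

/-- `w` is orthogonal to some primary subspace for `P`. -/
def OrthToPrimary {n m : ℕ} (v : Fin m → Fin n → ℤ) (w : Fin n → ℤ) : Prop :=
  ∃ V : Submodule ℝ (Fin n → ℝ), IsPrimary v V ∧ ∀ x ∈ V, (∑ i, (w i : ℝ) * x i) = 0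

/-!
A point `u` lies in `Trop(P, w)` as soon as some `a` minimizing `l_j(u)` over `J_w` also lies in
`J_{w'}` for some `w'` with `J_{w'} ⊆ J_w` and `u ∈ Trop(P, w')`: the two minimizers for `w'` are
then minimizers for `w`. Such a `w'` orthogonal to a primary subspace exists because `v_a` is not in
the span of the `v_j` orthogonal to `w`, so this set of normals can be enlarged to a maximal one
whose span still misses `v_a`. That span is a hyperplane, and since it is rational it is cut out by
a primitive lattice vector.
-/

section Coatom

variable {K V ι : Type*} [DivisionRing K] [AddCommGroup V] [Module K V]

theorem finrank_add_one_of_isCoatom [FiniteDimensional K V] {p : Submodule K V}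
    (hp : IsCoatom p) : Module.finrank K p + 1 = Module.finrank K V := by
  have quotient_finrank : Module.finrank K (V ⧸ p) = 1 :=
    isSimpleModule_iff_finrank_eq_one.1 (isSimpleModule_iff_isCoatom.2 hp)
  rw [← p.finrank_quotient_add_finrank, quotient_finrank, add_comm]

theorem exists_superset_isCoatom_span_image [Finite ι] {v : ι → V}
    (hv : Submodule.span K (Set.range v) = ⊤) {S : Set ι} {x : V}
    (hx : x ∉ Submodule.span K (v '' S)) :
    ∃ T, S ⊆ T ∧ IsCoatom (Submodule.span K (v '' T)) ∧ x ∉ Submodule.span K (v '' T) := by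
  obtain ⟨T, hST, hT⟩ :=
    Finite.exists_le_maximal (p := fun T : Set ι => x ∉ Submodule.span K (v '' T)) hx
  refine ⟨T, hST, ?_, hT.prop⟩
  have mem_span_insert (j : ι) : v j ∈ Submodule.span K (insert x (v '' T)) := by
    by_cases hj : j ∈ T
    · exact Submodule.subset_span (Or.inr ⟨j, hj, rfl⟩)
    · have hx_insert : x ∈ Submodule.span K (insert (v j) (v '' T)) := by
        rw [← Set.image_insert_eq]
        exact not_not.1 (hT.not_prop_of_gt (Set.ssubset_insert hj))
      exact mem_span_insert_exchange hx_insert hT.prop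
  have span_insert_eq_top : Submodule.span K (insert x (v '' T)) = ⊤ :=
    top_le_iff.1 (hv ▸ Submodule.span_le.2 (Set.range_subset_iff.2 mem_span_insert))
  rw [← covBy_top_iff, ← span_insert_eq_top, Submodule.span_insert]
  exact Submodule.covBy_span_singleton_sup hT.prop

end Coatom

section DotProduct

variable {ι : Type*} [Fintype ι]

theorem dotProduct_eq_zero_of_mem_span {R : Type*} [CommSemiring R] {S : Set (ι → R)}
    {w x : ι → R} (hw : ∀ s ∈ S, w ⬝ᵥ s = 0) (hx : x ∈ Submodule.span R S) : w ⬝ᵥ x = 0 :=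
  (Submodule.span_le (p := LinearMap.ker (dotProductBilin R R w))).2 hw hx

theorem algebraMap_comp_mem_span {K L κ : Type*} [CommSemiring K] [CommSemiring L] [Algebra K L]
    {S : Set (κ → K)} {x : κ → K} (hx : x ∈ Submodule.span K S) :
    algebraMap K L ∘ x ∈ Submodule.span L ((algebraMap K L ∘ ·) '' S) := by
  have hmap := Submodule.mem_map_of_mem (f := (Algebra.linearMap K L).compLeft κ) hx
  rw [Submodule.map_span] at hmap
  exact Submodule.span_le_restrictScalars K L _ hmap

theorem exists_algebraMap_dotProduct_eq_smul {R K : Type*} [CommRing R] [Field K] [Algebra R K]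
    [IsFractionRing R K] (f : Module.Dual K (ι → K)) :
    ∃ (g : ι → R) (b : R), b ≠ 0 ∧
      ∀ y : ι → R, algebraMap R K (g ⬝ᵥ y) = b • f (algebraMap R K ∘ y) := by
  obtain ⟨c, rfl⟩ := (dotProductEquiv K ι).surjective f
  obtain ⟨b, hb⟩ := IsLocalization.exist_integer_multiples_of_finite (nonZeroDivisors R) c
  choose g hg using hb
  have : Nontrivial R := (algebraMap R K).domain_nontrivial
  refine ⟨g, b, nonZeroDivisors.ne_zero b.2, fun y => ?_⟩
  simp [dotProduct, hg, Finset.smul_sum]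

theorem exists_dotProduct_ne_zero_of_notMem_span {R L : Type*} (K : Type*) [CommRing R]
    [Field K] [CommSemiring L] [Algebra R K] [IsFractionRing R K] [Algebra K L] [Algebra R L]
    [IsScalarTower R K L] {S : Set (ι → R)} {x : ι → R}
    (hx : algebraMap R L ∘ x ∉ Submodule.span L ((algebraMap R L ∘ ·) '' S)) :
    ∃ g : ι → R, (∀ s ∈ S, g ⬝ᵥ s = 0) ∧ g ⬝ᵥ x ≠ 0 := by
  have hxK : algebraMap R K ∘ x ∉ Submodule.span K ((algebraMap R K ∘ ·) '' S) := by
    intro hmem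
    apply hx
    simpa only [Set.image_image, ← Function.comp_assoc, ← RingHom.coe_comp,
      ← IsScalarTower.algebraMap_eq] using algebraMap_comp_mem_span (L := L) hmem
  obtain ⟨f, hfx, hfS⟩ := Submodule.exists_le_ker_of_notMem hxK
  obtain ⟨g, b, hb, hg⟩ := exists_algebraMap_dotProduct_eq_smul (R := R) f
  have dotProduct_eq_zero_iff_map (y : ι → R) : g ⬝ᵥ y = 0 ↔ f (algebraMap R K ∘ y) = 0 := by
    rw [← FaithfulSMul.algebraMap_eq_zero_iff R K, hg, Algebra.smul_def, mul_eq_zero,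
      FaithfulSMul.algebraMap_eq_zero_iff, or_iff_right hb]
  exact ⟨g, fun s hs => (dotProduct_eq_zero_iff_map s).2 (hfS (Submodule.subset_span ⟨s, hs, rfl⟩)),
    mt (dotProduct_eq_zero_iff_map x).1 hfx⟩

end DotProduct

section Lattice

variable {n : ℕ}

theorem intCast_zdot {R : Type*} [Ring R] (w x : Fin n → ℤ) :
    (zdot w x : R) = (fun i => (w i : R)) ⬝ᵥ fun i => (x i : R) := by
  simp [zdot, dotProduct]

theorem Primitive.ne_zero {w : Fin n → ℤ} (hw : Primitive w) : w ≠ 0 := by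
  rintro rfl
  have gcd_zero : Finset.univ.gcd (0 : Fin n → ℤ) = 0 := Finset.gcd_eq_zero_iff.2 fun _ _ => rfl
  exact zero_ne_one (gcd_zero.symm.trans hw)

theorem exists_primitive_zdot_eq_zero_iff {w : Fin n → ℤ} (hw : w ≠ 0) :
    ∃ w', Primitive w' ∧ ∀ x, zdot w' x = 0 ↔ zdot w x = 0 := by
  obtain ⟨i, hi⟩ := Function.ne_iff.1 hw
  obtain ⟨w', hww', hprim⟩ := Finset.extract_gcd w ⟨i, Finset.mem_univ i⟩
  have gcd_ne_zero : Finset.univ.gcd w ≠ 0 :=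
    fun h => hi (Finset.gcd_eq_zero_iff.1 h i (Finset.mem_univ i))
  have zdot_eq (x : Fin n → ℤ) : zdot w x = Finset.univ.gcd w * zdot w' x := by
    rw [zdot, zdot, Finset.mul_sum]
    exact Finset.sum_congr rfl fun i hi => by rw [hww' i hi, mul_assoc]
  exact ⟨w', hprim, fun x => by rw [zdot_eq, mul_eq_zero, or_iff_right gcd_ne_zero]⟩

end Lattice

section Polytope

variable {n m : ℕ} {v : Fin m → Fin n → ℤ}

theorem intCast_dotProduct_eq_zero_of_mem_span {T : Set (Fin m)} {w : Fin n → ℤ} {x : Fin n → ℝ}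
    (hw : ∀ j ∈ T, zdot w (v j) = 0)
    (hx : x ∈ Submodule.span ℝ ((fun j => fun i => (v j i : ℝ)) '' T)) :
    (fun i => (w i : ℝ)) ⬝ᵥ x = 0 := by
  refine dotProduct_eq_zero_of_mem_span (Set.forall_mem_image.2 fun j hj => ?_) hx
  rw [← intCast_zdot, hw j hj, Int.cast_zero]

theorem exists_zdot_ne_zero
    (hspan : Submodule.span ℝ (Set.range fun j => fun i => (v j i : ℝ)) = ⊤)
    {w : Fin n → ℤ} (hw : w ≠ 0) : ∃ j, zdot w (v j) ≠ 0 := by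
  contrapose! hw
  have cast_eq_zero : (fun i => (w i : ℝ)) = 0 :=
    dotProduct_eq_zero _ fun x => intCast_dotProduct_eq_zero_of_mem_span
      (T := Set.univ) (fun j _ => hw j) (by simp [hspan])
  exact funext fun i => Int.cast_eq_zero.1 (congrFun cast_eq_zero i)

theorem exists_superset_isPrimary_span_image
    (hspan : Submodule.span ℝ (Set.range fun j => fun i => (v j i : ℝ)) = ⊤)
    {w : Fin n → ℤ} {a : Fin m} (ha : zdot w (v a) ≠ 0) :
    ∃ T : Set (Fin m), {j | zdot w (v j) = 0} ⊆ T ∧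
      IsPrimary v (Submodule.span ℝ ((fun j => fun i => (v j i : ℝ)) '' T)) ∧
      (fun i => (v a i : ℝ)) ∉ Submodule.span ℝ ((fun j => fun i => (v j i : ℝ)) '' T) := by
  have notMem_span : (fun i => (v a i : ℝ)) ∉
      Submodule.span ℝ ((fun j => fun i => (v j i : ℝ)) '' {j | zdot w (v j) = 0}) := by
    intro hmem
    have cast_eq_zero := intCast_dotProduct_eq_zero_of_mem_span (fun _ hj => hj) hmem
    rw [← intCast_zdot] at cast_eq_zero
    exact ha (Int.cast_eq_zero.1 cast_eq_zero)
  obtain ⟨T, hT, hcoatom, haT⟩ := exists_superset_isCoatom_span_image hspan notMem_span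
  refine ⟨T, hT, ⟨?_, T, rfl⟩, haT⟩
  have finrank_add_one := finrank_add_one_of_isCoatom hcoatom
  rw [Module.finrank_fin_fun] at finrank_add_one
  exact Nat.eq_sub_of_add_eq finrank_add_one

theorem exists_primitive_orthToPrimary
    (hspan : Submodule.span ℝ (Set.range fun j => fun i => (v j i : ℝ)) = ⊤)
    {w : Fin n → ℤ} {a : Fin m} (ha : zdot w (v a) ≠ 0) :
    ∃ w', Primitive w' ∧ OrthToPrimary v w' ∧ zdot w' (v a) ≠ 0 ∧
      ∀ j, zdot w (v j) = 0 → zdot w' (v j) = 0 := by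
  obtain ⟨T, hT, hprimary, haT⟩ := exists_superset_isPrimary_span_image hspan ha
  obtain ⟨g, hgT, hga⟩ := exists_dotProduct_ne_zero_of_notMem_span (R := ℤ) (L := ℝ) ℚ
    (S := v '' T) (x := v a) (by rwa [Set.image_image])
  have hg : g ≠ 0 := by
    rintro rfl
    exact hga (zero_dotProduct _)
  obtain ⟨w', hw', hzero⟩ := exists_primitive_zdot_eq_zero_iff hg
  have zdot_eq_zero (j : Fin m) (hj : j ∈ T) : zdot w' (v j) = 0 :=
    (hzero _).2 (hgT _ ⟨j, hj, rfl⟩)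
  exact ⟨w', hw',
    ⟨_, hprimary, fun x hx => intCast_dotProduct_eq_zero_of_mem_span zdot_eq_zero hx⟩,
    mt (hzero _).1 hga, fun j hj => zdot_eq_zero j (hT hj)⟩

theorem mem_tropRel_of_minimizer {lam : Fin m → ℝ} {u : Fin n → ℝ} {w w' : Fin n → ℤ} {a : Fin m}
    (hmin : ∀ j, zdot w (v j) ≠ 0 → lf v lam a u ≤ lf v lam j u)
    (ha : zdot w' (v a) ≠ 0) (hzero : ∀ j, zdot w (v j) = 0 → zdot w' (v j) = 0)
    (hu : u ∈ TropRel v lam w') : u ∈ TropRel v lam w := by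
  obtain ⟨j₁, j₂, hne, h₁, h₂, heq, hmin'⟩ := hu
  exact ⟨j₁, j₂, hne, mt (hzero j₁) h₁, mt (hzero j₂) h₂, heq,
    fun j hj => (hmin' a ha).trans (hmin j hj)⟩

end Polytope

theorem statement0_general {n m : ℕ} (v : Fin m → Fin n → ℤ) (lam : Fin m → ℝ)
    (hspan : Submodule.span ℝ (Set.range fun j => fun i => ((v j i : ℝ)))
      = (⊤ : Submodule ℝ (Fin n → ℝ)))
    (u : Fin n → ℝ) :
    (∀ w : Fin n → ℤ, w ≠ 0 → u ∈ TropRel v lam w) ↔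
    (∀ w : Fin n → ℤ, Primitive w → OrthToPrimary v w → u ∈ TropRel v lam w) := by
  refine ⟨fun h w hw _ => h w hw.ne_zero, fun h w hw => ?_⟩
  obtain ⟨a, ha, hmin⟩ := Set.exists_min_image {j | zdot w (v j) ≠ 0} (fun j => lf v lam j u)
    (Set.toFinite _) (exists_zdot_ne_zero hspan hw)
  obtain ⟨w', hprim, horth, ha', hzero⟩ := exists_primitive_orthToPrimary hspan ha
  exact mem_tropRel_of_minimizer hmin ha' hzero (h w' hprim horth)

/-- For a compact polytope `P ⊂ ℝ^n` with nonempty interior, given by a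
non-redundant description with pairwise distinct primitive normal vectors spanning `ℝ^n`, and a
point `u` of the interior of `P`, the following are equivalent: (i) `u ∈ Trop(P, w)` for every
nonzero lattice vector `w`; (ii) `u ∈ Trop(P, w)` for every primitive lattice vector `w`
orthogonal to some primary subspace for `P`. -/
theorem statement0 {n m : ℕ} (hn : 1 ≤ n) (hm : 1 ≤ m)
    (v : Fin m → Fin n → ℤ) (lam : Fin m → ℝ)
    (hdist : Function.Injective v)
    (hprim : ∀ j, Primitive (v j))
    (hspan : Submodule.span ℝ (Set.range fun j => fun i => ((v j i : ℝ)))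
      = (⊤ : Submodule ℝ (Fin n → ℝ)))
    (hcpt : IsCompact (Pset v lam))
    (hint : (interior (Pset v lam)).Nonempty)
    (hnr : ∀ j, ∃ p ∈ Pset v lam, lf v lam j p = 0 ∧ ∀ k, k ≠ j → 0 < lf v lam k p)
    (u : Fin n → ℝ) (hu : u ∈ interior (Pset v lam)) :
    (∀ w : Fin n → ℤ, w ≠ 0 → u ∈ TropRel v lam w) ↔
    (∀ w : Fin n → ℤ, Primitive w → OrthToPrimary v w → u ∈ TropRel v lam w) := by
  exact statement0_general v lam hspan u
end
end

section
/- Let P ⊂ ℝ^n be a compact polytope with nonempty interior given by a non-redundant description with pairwise distinct primitive normal vectors v_1, …, v_m ∈ ℤ^n spanning ℝ^n, and let u be a point of the interior of P. Then the generalized leading term equation at u admits a solution if and only if for every nonzero lattice vector w ∈ ℤ^n the point u belongs to Trop(P, w). -/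
open scoped Classical

noncomputable section

/-- The generalized leading term equation at `u` admits a solution: there are nonzero complex
numbers `c_j` and nonzero `y_i` such that for every `j₀` and every lattice vector `w` with
`⟨w, v_j⟩ = 0` for all `j` with `l_j(u) < l_{j₀}(u)`, one has
`∑_{j : l_j(u) = l_{j₀}(u)} c_j ⟨w, v_j⟩ y^{v_j} = 0`. -/
def GLTESolvable {n m : ℕ} (v : Fin m → Fin n → ℤ) (lam : Fin m → ℝ) (u : Fin n → ℝ) : Prop :=
  ∃ (c : Fin m → ℂ) (y : Fin n → ℂ), (∀ j, c j ≠ 0) ∧ (∀ i, y i ≠ 0) ∧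
    ∀ (j₀ : Fin m) (w : Fin n → ℤ),
      (∀ j : Fin m, lf v lam j u < lf v lam j₀ u → zdot w (v j) = 0) →
      (∑ j ∈ Finset.univ.filter (fun j => lf v lam j u = lf v lam j₀ u),
          c j * (zdot w (v j) : ℂ) * ∏ i, y i ^ (v j i)) = 0

/-!
Write `l j` for `l_j(u)`. Both conditions amount to: each `v j₀` lies in the rational span of the
other `v j` with `l j ≤ l j₀`. If it did not, a lattice vector `w` would separate it from them, so
the minimum of `l` over `J_w` would be attained at `j₀` only. If it does, a linear relation
expressing `v j₀` in this way yields a solution with `y = 1` and `c j₀ ≠ 0`, except that other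
coefficients may vanish; the solutions with `y = 1` form a vector space over an infinite field, so
one of them has no vanishing coefficient. Conversely, if `j₀` were the only minimizer of `l` over
`J_w`, the equation for `j₀` and `w` would reduce to the single nonzero term at `j₀`.
-/

open Finset Submodule

section DotProduct

variable {ι κ : Type*} [Fintype ι]

lemma exists_dotProduct_ne_zero_of_span_range_eq_top {R : Type*} [CommSemiring R]
    {v : κ → ι → R} (hv : span R (Set.range v) = ⊤) {w : ι → R} (hw : w ≠ 0) :
    ∃ j, w ⬝ᵥ v j ≠ 0 := by
  by_contra! horth
  refine hw ((dotProductEquiv R ι).map_eq_zero_iff.mp ?_)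
  exact LinearMap.ext_on_range hv horth

lemma exists_dotProduct_separating_of_notMem_span {R K : Type*} [CommRing R] [Field K]
    [Algebra R K] [IsFractionRing R K] {v : κ → ι → R} {s : Set κ} {x : ι → R}
    (hx : algebraMap R K ∘ x ∉ span K ((fun j ↦ algebraMap R K ∘ v j) '' s)) :
    ∃ w : ι → R, w ⬝ᵥ x ≠ 0 ∧ ∀ j ∈ s, w ⬝ᵥ v j = 0 := by
  obtain ⟨f, hfx, hf⟩ := exists_le_ker_of_notMem hx
  obtain ⟨q, rfl⟩ := (dotProductEquiv K ι).surjective f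
  obtain ⟨b, hb⟩ := IsLocalization.exist_integer_multiples_of_finite (nonZeroDivisors R) q
  choose w hw using hb
  have map_dotProduct (z : ι → R) :
      algebraMap R K (w ⬝ᵥ z) = algebraMap R K b * (q ⬝ᵥ (algebraMap R K ∘ z)) := by
    have hwq : algebraMap R K ∘ w = (b : R) • q := funext hw
    rw [RingHom.map_dotProduct, hwq, smul_dotProduct, Algebra.smul_def]
  refine ⟨w, fun h ↦ ?_, fun j hj ↦ IsFractionRing.injective R K ?_⟩
  · refine mul_ne_zero (IsLocalization.map_units K b).ne_zero hfx ?_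
    rw [dotProductEquiv_apply_apply, ← map_dotProduct, h, map_zero]
  · have hqv : q ⬝ᵥ (algebraMap R K ∘ v j) = 0 := hf (subset_span ⟨j, hj, rfl⟩)
    rw [map_dotProduct, hqv, mul_zero, map_zero]

end DotProduct

section BalancedCoeffs

variable {ι α V : Type*} [Fintype ι] [PartialOrder α] [DecidableEq α] [AddCommGroup V]

/-- The coefficient families `c` such that, for every level `a`, the combination
`∑ c j • v j` over the indices of level `l j = a` vanishes modulo the vectors of strictly lower
level. For `l j = l_j(u)` these are the solutions of the generalized leading term equation with
`y = 1`, coefficients `c j = 0` being allowed: the lattice vectors `w` tested at level `a` are the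
integral functionals that vanish on the lower vectors. -/
def balancedCoeffs (K : Type*) [CommRing K] [Module K V] (v : ι → V) (l : ι → α) :
    Submodule K (ι → K) :=
  ⨅ a, (span K (v '' {j | l j < a})).comap (∑ j with l j = a, (LinearMap.proj j).smulRight (v j))

variable {v : ι → V} {l : ι → α}

section CommRing

variable {K : Type*} [CommRing K] [Module K V] {c : ι → K}

lemma mem_balancedCoeffs :
    c ∈ balancedCoeffs K v l ↔ ∀ a, ∑ j with l j = a, c j • v j ∈ span K (v '' {j | l j < a}) := by
  simp [balancedCoeffs]

lemma mem_balancedCoeffs_of_support_subset_level {a : α} (hc : ∀ j, l j ≠ a → c j = 0)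
    (hsum : ∑ j, c j • v j ∈ span K (v '' {j | l j < a})) :
    c ∈ balancedCoeffs K v l := by
  refine mem_balancedCoeffs.mpr fun b ↦ ?_
  obtain rfl | hba := eq_or_ne b a
  · rwa [sum_filter_of_ne fun j _ hj ↦ ?_]
    contrapose! hj
    rw [hc j hj, zero_smul]
  · rw [sum_eq_zero fun j hj ↦ ?_]
    · exact zero_mem _
    · rw [hc j ((mem_filter.mp hj).2.trans_ne hba), zero_smul]

lemma exists_mem_balancedCoeffs_apply_ne_zero [Nontrivial K] {j₀ : ι}
    (h : v j₀ ∈ span K (v '' {j | j ≠ j₀ ∧ l j ≤ l j₀})) :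
    ∃ c ∈ balancedCoeffs K v l, c j₀ ≠ 0 := by
  have split_levels : {j | j ≠ j₀ ∧ l j ≤ l j₀} = {j | l j < l j₀} ∪ {j | j ≠ j₀ ∧ l j = l j₀} := by
    ext j
    have : l j < l j₀ → j ≠ j₀ := fun hlt hj ↦ hlt.ne (congrArg l hj)
    simp only [Set.mem_ofPred_eq, Set.mem_union, le_iff_lt_or_eq]
    tauto
  rw [split_levels, Set.image_union, span_union, Submodule.mem_sup] at h
  obtain ⟨lower, hlower, same, hsame, hadd⟩ := h
  obtain ⟨b, hb, rfl⟩ := (Finsupp.mem_span_image_iff_linearCombination K).mp hsame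
  have hb_zero (j : ι) (hj : j = j₀ ∨ l j ≠ l j₀) : b j = 0 :=
    Finsupp.notMem_support_iff.mp fun hmem ↦ by
      have := (Finsupp.mem_supported K b).mp hb hmem
      exact hj.elim this.1 fun hne ↦ hne this.2
  let c : ι → K := Pi.single j₀ 1 - ⇑b
  have hsum : ∑ j, c j • v j = lower := by
    rw [eq_sub_of_add_eq hadd, Finsupp.linearCombination_apply, Finsupp.sum_fintype _ _ (by simp)]
    simp [c, sub_smul, Pi.single_apply]
  refine ⟨c, mem_balancedCoeffs_of_support_subset_level (fun j hj ↦ ?_) (hsum ▸ hlower), ?_⟩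
  · have hj₀ : j ≠ j₀ := fun h ↦ hj (congrArg l h)
    simp [c, hj₀, hb_zero j (.inr hj)]
  · simp [c, hb_zero j₀ (.inl rfl)]

lemma sum_mul_apply_eq_zero_of_mem_balancedCoeffs (hc : c ∈ balancedCoeffs K v l) {a : α}
    {f : Module.Dual K V} (hf : ∀ j, l j < a → f (v j) = 0) :
    ∑ j with l j = a, c j * f (v j) = 0 := by
  have lower_le_ker : span K (v '' {j | l j < a}) ≤ LinearMap.ker f :=
    span_le.mpr (Set.forall_mem_image.mpr hf)
  have := lower_le_ker (mem_balancedCoeffs.mp hc a)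
  simpa using this

end CommRing

lemma exists_mem_balancedCoeffs_forall_ne_zero {K : Type*} [Field K] [Infinite K] [Module K V]
    (h : ∀ j₀, v j₀ ∈ span K (v '' {j | j ≠ j₀ ∧ l j ≤ l j₀})) :
    ∃ c ∈ balancedCoeffs K v l, ∀ j, c j ≠ 0 :=
  Module.Dual.exists_forall_mem_ne_zero_of_forall_exists (balancedCoeffs K v l)
    (fun j ↦ LinearMap.proj j) fun j₀ ↦ exists_mem_balancedCoeffs_apply_ne_zero (h j₀)

end BalancedCoeffs

section Lattice

variable {n m : ℕ} {v : Fin m → Fin n → ℤ} {lam : Fin m → ℝ} {u : Fin n → ℝ}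

lemma exists_zdot_ne_zero_of_span_eq_top
    (hspan : span ℝ (Set.range fun j i ↦ (v j i : ℝ)) = ⊤) {w : Fin n → ℤ} (hw : w ≠ 0) :
    ∃ j, zdot w (v j) ≠ 0 := by
  have hw_real : (fun i ↦ (w i : ℝ)) ≠ 0 := fun h ↦
    hw (funext fun i ↦ Int.cast_injective (α := ℝ) (by simpa using congrFun h i))
  obtain ⟨j, hj⟩ := exists_dotProduct_ne_zero_of_span_range_eq_top hspan hw_real
  exact ⟨j, fun h ↦ hj (by simpa [zdot, dotProduct] using congrArg (Int.cast (R := ℝ)) h)⟩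

lemma mem_tropRel_of_gLTESolvable (h : GLTESolvable v lam u) {w : Fin n → ℤ}
    (hw : ∃ j, zdot w (v j) ≠ 0) : u ∈ TropRel v lam w := by
  obtain ⟨c, y, hc, hy, heq⟩ := h
  obtain ⟨j₁, hj₁, hmin⟩ := Set.exists_min_image {j | zdot w (v j) ≠ 0} (fun j ↦ lf v lam j u)
    (Set.toFinite _) hw
  have hsum := heq j₁ w fun j hlt ↦ by_contra fun hj ↦ (hmin j hj).not_gt hlt
  have term_ne_zero : c j₁ * (zdot w (v j₁) : ℂ) * ∏ i, y i ^ v j₁ i ≠ 0 :=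
    mul_ne_zero (mul_ne_zero (hc j₁) (Int.cast_ne_zero.mpr hj₁))
      (prod_ne_zero_iff.mpr fun i _ ↦ zpow_ne_zero _ (hy i))
  obtain ⟨j₂, hne, hlevel, hj₂⟩ :
      ∃ j₂, j₂ ≠ j₁ ∧ lf v lam j₂ u = lf v lam j₁ u ∧ zdot w (v j₂) ≠ 0 := by
    by_contra! hunique
    rw [sum_eq_single_of_mem j₁ (by simp) fun j hj hne ↦ ?_] at hsum
    · exact term_ne_zero hsum
    · simp [hunique j hne (mem_filter.mp hj).2]
  exact ⟨j₁, j₂, hne.symm, hj₁, hj₂, hlevel.symm, hmin⟩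

lemma mem_span_of_forall_mem_tropRel (h : ∀ w : Fin n → ℤ, w ≠ 0 → u ∈ TropRel v lam w)
    (j₀ : Fin m) :
    algebraMap ℤ ℚ ∘ v j₀ ∈ span ℚ ((fun j ↦ algebraMap ℤ ℚ ∘ v j) ''
      {j | j ≠ j₀ ∧ lf v lam j u ≤ lf v lam j₀ u}) := by
  by_contra hmem
  obtain ⟨w, hwj₀, hw⟩ := exists_dotProduct_separating_of_notMem_span hmem
  have hw_ne : w ≠ 0 := fun hw0 ↦ hwj₀ (by rw [hw0, zero_dotProduct])
  obtain ⟨j₁, j₂, hne, hj₁, hj₂, hlevel, hmin⟩ := h w hw_ne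
  have eq_j₀ (j : Fin m) (hj : zdot w (v j) ≠ 0) (hle : lf v lam j u ≤ lf v lam j₀ u) : j = j₀ :=
    by_contra fun hjj₀ ↦ hj (hw j ⟨hjj₀, hle⟩)
  have hle := hmin j₀ hwj₀
  exact hne ((eq_j₀ j₁ hj₁ hle).trans (eq_j₀ j₂ hj₂ (hlevel ▸ hle)).symm)

lemma gLTESolvable_of_mem_balancedCoeffs {c : Fin m → ℚ}
    (hc : c ∈ balancedCoeffs ℚ (fun j ↦ algebraMap ℤ ℚ ∘ v j) (fun j ↦ lf v lam j u))
    (hc_ne : ∀ j, c j ≠ 0) : GLTESolvable v lam u := by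
  refine ⟨fun j ↦ c j, 1, fun j ↦ Rat.cast_ne_zero.mpr (hc_ne j), fun _ ↦ one_ne_zero,
    fun j₀ w hw ↦ ?_⟩
  have cast_zdot (j : Fin m) :
      dotProductEquiv ℚ (Fin n) (algebraMap ℤ ℚ ∘ w) (algebraMap ℤ ℚ ∘ v j) = zdot w (v j) :=
    (RingHom.map_dotProduct (algebraMap ℤ ℚ) w (v j)).symm
  have hsum := sum_mul_apply_eq_zero_of_mem_balancedCoeffs hc (a := lf v lam j₀ u)
    fun j hlt ↦ (cast_zdot j).trans (by rw [hw j hlt, Int.cast_zero])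
  simp only [cast_zdot] at hsum
  simpa using congrArg (Rat.cast (K := ℂ)) hsum

end Lattice

theorem statement1_general {n m : ℕ} (v : Fin m → Fin n → ℤ) (lam : Fin m → ℝ)
    (hspan : span ℝ (Set.range fun j i ↦ (v j i : ℝ)) = ⊤) (u : Fin n → ℝ) :
    GLTESolvable v lam u ↔ ∀ w : Fin n → ℤ, w ≠ 0 → u ∈ TropRel v lam w := by
  refine ⟨fun hsolv w hw ↦ ?_, fun htrop ↦ ?_⟩
  · exact mem_tropRel_of_gLTESolvable hsolv (exists_zdot_ne_zero_of_span_eq_top hspan hw)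
  · obtain ⟨c, hc, hc_ne⟩ :=
      exists_mem_balancedCoeffs_forall_ne_zero (mem_span_of_forall_mem_tropRel htrop)
    exact gLTESolvable_of_mem_balancedCoeffs hc hc_ne

/-- For a compact polytope `P ⊂ ℝ^n` with nonempty interior, given by a
non-redundant description with pairwise distinct primitive normal vectors spanning `ℝ^n`, and a
point `u` of the interior of `P`, the generalized leading term equation at `u` admits a solution
iff `u ∈ Trop(P, w)` for every nonzero lattice vector `w`. -/
theorem statement1 {n m : ℕ} (hn : 1 ≤ n) (hm : 1 ≤ m)
    (v : Fin m → Fin n → ℤ) (lam : Fin m → ℝ)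
    (hdist : Function.Injective v)
    (hprim : ∀ j, Primitive (v j))
    (hspan : Submodule.span ℝ (Set.range fun j => fun i => ((v j i : ℝ)))
      = (⊤ : Submodule ℝ (Fin n → ℝ)))
    (hcpt : IsCompact (Pset v lam))
    (hint : (interior (Pset v lam)).Nonempty)
    (hnr : ∀ j, ∃ p ∈ Pset v lam, lf v lam j p = 0 ∧ ∀ k, k ≠ j → 0 < lf v lam k p)
    (u : Fin n → ℝ) (hu : u ∈ interior (Pset v lam)) :
    GLTESolvable v lam u ↔ (∀ w : Fin n → ℤ, w ≠ 0 → u ∈ TropRel v lam w) :=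
  statement1_general v lam hspan u
end
end

section
/- Let P = {u ∈ ℝ^n : ⟨u, v_j⟩ − λ_j ≥ 0, j = 1, …, m} and P' = {u ∈ ℝ^n : ⟨u, v_j⟩ − λ'_j ≥ 0, j = 1, …, m} be nonempty compact sets with the same nonzero normal vectors v_1, …, v_m. Fix an index j, and assume there exist p ∈ P with ⟨p, v_j⟩ = λ_j and p' ∈ P' with ⟨p', v_j⟩ = λ'_j. Then the Hausdorff distance satisfies d_H(P, P') ≥ |λ_j − λ'_j| / ‖v_j‖. -/
noncomputable section

/-!
The functional `u ↦ ⟪v_j, u⟫` is `‖v_j‖`-Lipschitz, and since the `j`-th inequality is active, its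
infimum is `λ_j` over `P` and `λ'_j` over `P'`. The infima of a `K`-Lipschitz function over two sets
at Hausdorff distance `d` differ by at most `K * d`, because each point of one set is within any
`r > d` of some point of the other.
-/

section Lipschitz

variable {α : Type*} [PseudoMetricSpace α] {f : α → ℝ} {K : NNReal} {s t : Set α} {a b : ℝ}

theorem sub_le_mul_infDist_of_mem_lowerBounds (hf : LipschitzWith K f) (ht : t.Nonempty)
    (hb : b ∈ lowerBounds (f '' t)) (x : α) : b - f x ≤ K * Metric.infDist x t := by
  have : Nonempty t := ht.to_subtype
  rw [Metric.infDist_eq_iInf, Real.mul_iInf_of_nonneg K.coe_nonneg]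
  refine le_ciInf fun y ↦ ?_
  calc b - f x ≤ f y - f x := sub_le_sub_right (hb (Set.mem_image_of_mem f y.2)) _
    _ ≤ dist (f y) (f x) := Real.sub_le_dist _ _
    _ ≤ K * dist x y := dist_comm x y.1 ▸ hf.dist_le_mul y x

theorem sub_le_mul_hausdorffDist_of_isGLB_image (hf : LipschitzWith K f)
    (ha : IsGLB (f '' s) a) (hb : b ∈ lowerBounds (f '' t))
    (hst : Metric.hausdorffEDist s t ≠ ⊤) : b - a ≤ K * Metric.hausdorffDist s t := by
  suffices b - K * Metric.hausdorffDist s t ∈ lowerBounds (f '' s) from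
    sub_le_comm.1 (ha.2 this)
  refine Set.forall_mem_image.2 fun x hx ↦ sub_le_comm.1 ?_
  have ht : t.Nonempty := Metric.nonempty_of_hausdorffEDist_ne_top ⟨x, hx⟩ hst
  calc b - f x ≤ K * Metric.infDist x t := sub_le_mul_infDist_of_mem_lowerBounds hf ht hb x
    _ ≤ K * Metric.hausdorffDist s t := by
        gcongr
        exact Metric.infDist_le_hausdorffDist_of_mem hx hst

theorem abs_sub_le_mul_hausdorffDist_of_isGLB_image (hf : LipschitzWith K f)
    (ha : IsGLB (f '' s) a) (hb : IsGLB (f '' t) b) (hst : Metric.hausdorffEDist s t ≠ ⊤) :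
    |a - b| ≤ K * Metric.hausdorffDist s t := by
  refine abs_sub_le_iff.2 ⟨?_, sub_le_mul_hausdorffDist_of_isGLB_image hf ha hb.1 hst⟩
  rw [Metric.hausdorffDist_comm]
  rw [Metric.hausdorffEDist_comm] at hst
  exact sub_le_mul_hausdorffDist_of_isGLB_image hf hb ha.1 hst

end Lipschitz

theorem lipschitzWith_inner_right {E : Type*} [SeminormedAddCommGroup E] [InnerProductSpace ℝ E]
    (v : E) : LipschitzWith ‖v‖₊ (fun u ↦ inner ℝ v u) :=
  LipschitzWith.of_dist_le_mul fun x y ↦ by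
    rw [Real.dist_eq, ← inner_sub_right, dist_eq_norm]
    exact abs_real_inner_le_norm v (x - y)

theorem isLeast_inner_image_of_active {ι κ : Type*} [Fintype κ] {v : ι → EuclideanSpace ℝ κ}
    {c : ι → ℝ} {j : ι}
    (hact : ∃ p ∈ {u : EuclideanSpace ℝ κ | ∀ k, 0 ≤ (∑ i, u i * v k i) - c k},
      ∑ i, p i * v j i = c j) :
    IsLeast ((fun u ↦ inner ℝ (v j) u) ''
      {u : EuclideanSpace ℝ κ | ∀ k, 0 ≤ (∑ i, u i * v k i) - c k}) (c j) := by
  have inner_eq_sum (u : EuclideanSpace ℝ κ) : inner ℝ (v j) u = ∑ i, u i * v j i := by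
    simp [PiLp.inner_apply]
  simp only [inner_eq_sum]
  exact ⟨hact, Set.forall_mem_image.2 fun u hu ↦ sub_nonneg.1 (hu j)⟩

theorem statement6_general {E : Type*} [SeminormedAddCommGroup E] [InnerProductSpace ℝ E]
    {v : E} (hv : ‖v‖ ≠ 0) {P P' : Set E} {a a' : ℝ}
    (ha : IsGLB ((fun u ↦ inner ℝ v u) '' P) a)
    (ha' : IsGLB ((fun u ↦ inner ℝ v u) '' P') a')
    (hfin : Metric.hausdorffEDist P P' ≠ ⊤) :
    |a - a'| / ‖v‖ ≤ Metric.hausdorffDist P P' := by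
  rw [div_le_iff₀' ((norm_nonneg v).lt_of_ne' hv)]
  exact abs_sub_le_mul_hausdorffDist_of_isGLB_image (lipschitzWith_inner_right v) ha ha' hfin

/-- Let `P` and `P'` be nonempty compact polytopes in Euclidean `ℝ^n` cut out
by the same nonzero normal vectors `v_j` with constants `λ_j`, `λ'_j` respectively. If the `j`-th
inequality is active at some point of each polytope, then
`d_H(P, P') ≥ |λ_j − λ'_j| / ‖v_j‖`. -/
theorem statement6 {n m : ℕ}
    (v : Fin m → EuclideanSpace ℝ (Fin n)) (hv : ∀ j, v j ≠ 0)
    (lam lam' : Fin m → ℝ)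
    (P P' : Set (EuclideanSpace ℝ (Fin n)))
    (hP : P = {u | ∀ j, 0 ≤ (∑ i, u i * v j i) - lam j})
    (hP' : P' = {u | ∀ j, 0 ≤ (∑ i, u i * v j i) - lam' j})
    (hPne : P.Nonempty) (hPc : IsCompact P)
    (hP'ne : P'.Nonempty) (hP'c : IsCompact P')
    (j : Fin m)
    (hact : ∃ p ∈ P, (∑ i, p i * v j i) = lam j)
    (hact' : ∃ p ∈ P', (∑ i, p i * v j i) = lam' j) :
    |lam j - lam' j| / ‖v j‖ ≤ Metric.hausdorffDist P P' := by
  subst hP hP'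
  exact statement6_general (norm_ne_zero_iff.2 (hv j))
    (isLeast_inner_image_of_active hact).isGLB (isLeast_inner_image_of_active hact').isGLB
    (Metric.hausdorffEDist_ne_top_of_nonempty_of_bounded hPne hP'ne hPc.isBounded hP'c.isBounded)
end
end

section
/- Let v_1, …, v_s ∈ ℤ^n (s ≥ 2) be pairwise distinct primitive vectors, λ_1, …, λ_s ∈ ℝ, and l_j(u) = ⟨u, v_j⟩ − λ_j. Let (δ^{(i)})_{i∈ℕ} be a monotone sequence of real numbers converging to 0. Let T = {u ∈ ℝ^n : the minimum of {l_1(u), …, l_s(u)} is attained by at least two distinct indices} and, for each i, T^{(i)} = {u ∈ ℝ^n : the minimum of {l_1(u) + δ^{(i)}, l_2(u), …, l_s(u)} is attained by at least two distinct indices}. Then T and each T^{(i)} are nonempty, and T^{(i)} converges to T with respect to the Hausdorff distance: for every ε > 0 there exists N such that for all i ≥ N, every point of T is within distance ε of some point of T^{(i)} and every point of T^{(i)} is within distance ε of some point of T. -/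
open scoped Classical

noncomputable section

/-- The affine function `l_j(u) = ⟨u, v_j⟩ - λ_j` on Euclidean space. -/
def lfE {n m : ℕ} (v : Fin m → Fin n → ℤ) (lam : Fin m → ℝ) (j : Fin m)
    (u : EuclideanSpace ℝ (Fin n)) : ℝ :=
  (∑ i, u i * (v j i : ℝ)) - lam j

/-- The tropicalization of the family `{l_1, …, l_s}`: the set of points at which the pointwise
minimum of the family is attained by at least two distinct indices. -/
def TropAll {n s : ℕ} (v : Fin s → Fin n → ℤ) (lam : Fin s → ℝ) :
    Set (EuclideanSpace ℝ (Fin n)) :=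
  {u | ∃ j₁ j₂ : Fin s, j₁ ≠ j₂ ∧ lfE v lam j₁ u = lfE v lam j₂ u ∧
        ∀ j : Fin s, lfE v lam j₁ u ≤ lfE v lam j u}

/-!
If the minimum of a finite continuous family is attained by `j` at one point of a connected set, and
some other member is at most the `j`-th one at another point of it, then by the intermediate value
theorem the set meets the tropicalization. For affine functions with distinct linear parts, moving
by a multiple of a vector that separates two linear parts closes any gap between the two functions,
so a point where the two smallest values differ by `g` lies within `C * g` of the tropicalization,
with `C` depending only on the linear parts. Perturbing the constants by at most `d` turns a tie
into a gap of at most `2 * d`, which gives Hausdorff convergence with a linear rate.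
-/

open Filter Topology Function

section Tropicalization

variable {ι X R : Type*} [LinearOrder R]

/-- The tropicalization of an arbitrary family of functions: the points at which the minimum of the
family is attained by two distinct indices. -/
def tropicalization (f : ι → X → R) : Set X :=
  {u | ∃ j₁ j₂, j₁ ≠ j₂ ∧ f j₁ u = f j₂ u ∧ ∀ j, f j₁ u ≤ f j u}

lemma exists_ne_forall_le_of_mem_tropicalization {f : ι → X → R} {u : X}
    (hu : u ∈ tropicalization f) (j : ι) : ∃ a ≠ j, ∀ k, f a u ≤ f k u := by
  obtain ⟨j₁, j₂, hne, heq, hmin⟩ := hu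
  by_cases h : j₁ = j
  · exact ⟨j₂, h ▸ hne.symm, fun k => heq ▸ hmin k⟩
  · exact ⟨j₁, h, hmin⟩

theorem exists_mem_tropicalization_of_isPreconnected [Finite ι] [TopologicalSpace X]
    [TopologicalSpace R] [OrderClosedTopology R] {f : ι → X → R} {S : Set X}
    (hS : IsPreconnected S) (hf : ∀ k, ContinuousOn (f k) S) {j a : ι} (haj : a ≠ j) {x y : X}
    (hx : x ∈ S) (hy : y ∈ S) (hjx : ∀ k, f j x ≤ f k x) (hay : f a y ≤ f j y) :
    ∃ z ∈ S, z ∈ tropicalization f := by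
  have := Fintype.ofFinite ι
  let others : Finset ι := Finset.univ.erase j
  have ha : a ∈ others := Finset.mem_erase.mpr ⟨haj, Finset.mem_univ a⟩
  have hne : others.Nonempty := ⟨a, ha⟩
  obtain ⟨z, hz, htie⟩ : ∃ z ∈ S, f j z = others.inf' hne (f · z) :=
    hS.intermediate_value₂ hx hy (hf j)
      (ContinuousOn.finset_inf'_apply hne fun k _ => hf k)
      (Finset.le_inf' _ _ fun k _ => hjx k) ((Finset.inf'_le (f · y) ha).trans hay)
  obtain ⟨k, hk, hkz⟩ := Finset.exists_mem_eq_inf' hne (f · z)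
  refine ⟨z, hz, j, k, (Finset.ne_of_mem_erase hk).symm, htie.trans hkz, fun m => ?_⟩
  obtain rfl | hmj := eq_or_ne m j
  · exact le_rfl
  · exact htie.trans_le <| Finset.inf'_le (f · z) <|
      Finset.mem_erase.mpr ⟨hmj, Finset.mem_univ m⟩

end Tropicalization

section AffineFamily

variable {ι E : Type*} [SeminormedAddCommGroup E] [NormedSpace ℝ E]

/-- The affine functions `u ↦ φ j u - lam j`; the constants are subtracted, as in `lfE`. -/
def affineFamily (φ : ι → StrongDual ℝ E) (lam : ι → ℝ) (j : ι) (u : E) : ℝ :=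
  φ j u - lam j

lemma continuous_affineFamily (φ : ι → StrongDual ℝ E) (lam : ι → ℝ) (j : ι) :
    Continuous (affineFamily φ lam j) :=
  (φ j).continuous.sub continuous_const

lemma exists_sub_apply_eq_one {φ ψ : StrongDual ℝ E} (h : φ ≠ ψ) : ∃ x, φ x - ψ x = 1 := by
  obtain ⟨y, hy⟩ := DFunLike.ne_iff.mp h
  refine ⟨(φ y - ψ y)⁻¹ • y, ?_⟩
  rw [map_smul, map_smul, ← smul_sub, smul_eq_mul, inv_mul_cancel₀ (sub_ne_zero.mpr hy)]

lemma exists_forall_ne_exists_norm_le_sub_apply_eq_one [Finite ι] {φ : ι → StrongDual ℝ E}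
    (hφ : Injective φ) : ∃ C, ∀ j a, a ≠ j → ∃ x, ‖x‖ ≤ C ∧ φ j x - φ a x = 1 := by
  have hsep : ∀ p : {p : ι × ι // p.2 ≠ p.1}, ∃ x, φ p.1.1 x - φ p.1.2 x = 1 :=
    fun p => exists_sub_apply_eq_one (hφ.ne p.2.symm)
  choose x hx using hsep
  obtain ⟨C, hC⟩ := Finite.exists_le fun p => ‖x p‖
  exact ⟨C, fun j a haj => ⟨x ⟨(j, a), haj⟩, hC _, hx ⟨(j, a), haj⟩⟩⟩

lemma exists_mem_tropicalization_affineFamily_dist_le [Finite ι] {φ : ι → StrongDual ℝ E}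
    {lam : ι → ℝ} {u x : E} {j a : ι} (haj : a ≠ j)
    (hj : ∀ k, affineFamily φ lam j u ≤ affineFamily φ lam k u) (hx : φ j x - φ a x = 1) :
    ∃ u' ∈ tropicalization (affineFamily φ lam),
      dist u u' ≤ (affineFamily φ lam a u - affineFamily φ lam j u) * ‖x‖ := by
  set g := affineFamily φ lam a u - affineFamily φ lam j u with hg
  have hg0 : 0 ≤ g := sub_nonneg.mpr (hj a)
  have hend : u + g • x ∈ Metric.closedBall u (g * ‖x‖) := by
    rw [mem_closedBall_iff_norm, add_sub_cancel_left, norm_smul, Real.norm_of_nonneg hg0]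
  have hclosed : affineFamily φ lam a (u + g • x) = affineFamily φ lam j (u + g • x) := by
    simp only [affineFamily, map_add, map_smul, smul_eq_mul] at hg ⊢
    linear_combination -g * hx - hg
  obtain ⟨u', hu', hmem⟩ := exists_mem_tropicalization_of_isPreconnected
    (convex_closedBall u (g * ‖x‖)).isPreconnected
    (fun k => (continuous_affineFamily φ lam k).continuousOn) haj
    (Metric.mem_closedBall_self (by positivity)) hend hj hclosed.le
  exact ⟨u', hmem, Metric.mem_closedBall'.mp hu'⟩

lemma tropicalization_affineFamily_nonempty [Finite ι] [Nontrivial ι]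
    {φ : ι → StrongDual ℝ E} (hφ : Injective φ) (lam : ι → ℝ) :
    (tropicalization (affineFamily φ lam)).Nonempty := by
  obtain ⟨j, hj⟩ := Finite.exists_min (affineFamily φ lam · 0)
  obtain ⟨a, haj⟩ := exists_ne j
  obtain ⟨x, hx⟩ := exists_sub_apply_eq_one (hφ.ne haj.symm)
  obtain ⟨u, hu, -⟩ := exists_mem_tropicalization_affineFamily_dist_le haj hj hx
  exact ⟨u, hu⟩

lemma affineFamily_sub_le_of_le [Fintype ι] {φ : ι → StrongDual ℝ E} {lam lam' : ι → ℝ} {u : E}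
    {a j : ι} (h : affineFamily φ lam a u ≤ affineFamily φ lam j u) :
    affineFamily φ lam' a u - affineFamily φ lam' j u ≤ 2 * dist lam lam' := by
  have ha := (abs_le.mp ((Real.dist_eq _ _).symm.trans_le (dist_le_pi_dist lam lam' a))).2
  have hj := (abs_le.mp ((Real.dist_eq _ _).symm.trans_le (dist_le_pi_dist lam lam' j))).1
  unfold affineFamily at h ⊢
  linarith

theorem exists_forall_mem_tropicalization_affineFamily_dist_le [Fintype ι]
    {φ : ι → StrongDual ℝ E} (hφ : Injective φ) :
    ∃ C, ∀ lam lam' : ι → ℝ, ∀ u ∈ tropicalization (affineFamily φ lam),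
      ∃ u' ∈ tropicalization (affineFamily φ lam'), dist u u' ≤ 2 * dist lam lam' * C := by
  obtain ⟨C, hC⟩ := exists_forall_ne_exists_norm_le_sub_apply_eq_one hφ
  refine ⟨C, fun lam lam' u hu => ?_⟩
  have : Nonempty ι := ⟨hu.choose⟩
  obtain ⟨j, hj⟩ := Finite.exists_min (affineFamily φ lam' · u)
  obtain ⟨a, haj, ha⟩ := exists_ne_forall_le_of_mem_tropicalization hu j
  obtain ⟨x, hxC, hx⟩ := hC j a haj
  obtain ⟨u', hu', hdist⟩ := exists_mem_tropicalization_affineFamily_dist_le haj hj hx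
  refine ⟨u', hu', hdist.trans ?_⟩
  gcongr
  exact affineFamily_sub_le_of_le (ha j)

theorem statement7_general [Finite ι] [Nontrivial ι] {α : Type*} {l : Filter α}
    {φ : ι → StrongDual ℝ E} (hφ : Injective φ) {lam : ι → ℝ} {lam' : α → ι → ℝ}
    (hlam : Tendsto lam' l (𝓝 lam)) :
    (tropicalization (affineFamily φ lam)).Nonempty ∧
    (∀ i, (tropicalization (affineFamily φ (lam' i))).Nonempty) ∧
    ∀ ε > (0 : ℝ), ∀ᶠ i in l,
      (∀ u₁ ∈ tropicalization (affineFamily φ lam),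
        ∃ u₂ ∈ tropicalization (affineFamily φ (lam' i)), dist u₁ u₂ ≤ ε) ∧
      (∀ u₂ ∈ tropicalization (affineFamily φ (lam' i)),
        ∃ u₁ ∈ tropicalization (affineFamily φ lam), dist u₁ u₂ ≤ ε) := by
  have := Fintype.ofFinite ι
  refine ⟨tropicalization_affineFamily_nonempty hφ lam,
    fun i => tropicalization_affineFamily_nonempty hφ (lam' i), fun ε hε => ?_⟩
  obtain ⟨C, hC⟩ := exists_forall_mem_tropicalization_affineFamily_dist_le hφ
  have hbound : Tendsto (fun i => 2 * dist (lam' i) lam * C) l (𝓝 0) := by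
    simpa using ((tendsto_iff_dist_tendsto_zero.mp hlam).const_mul 2).mul_const C
  filter_upwards [hbound.eventually_le_const hε] with i hi
  constructor
  · intro u₁ hu₁
    obtain ⟨u₂, hu₂, h⟩ := hC lam (lam' i) u₁ hu₁
    exact ⟨u₂, hu₂, h.trans (dist_comm lam (lam' i) ▸ hi)⟩
  · intro u₂ hu₂
    obtain ⟨u₁, hu₁, h⟩ := hC (lam' i) lam u₂ hu₂
    exact ⟨u₁, hu₁, dist_comm u₁ u₂ ▸ h.trans hi⟩

end AffineFamily

section Lattice

variable {n s : ℕ}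

/-- The functional `u ↦ ⟨u, w⟩` on Euclidean space given by a lattice vector `w`. -/
def latticeFunctional (w : Fin n → ℤ) : StrongDual ℝ (EuclideanSpace ℝ (Fin n)) :=
  innerSL ℝ (WithLp.toLp 2 fun i => (w i : ℝ))

lemma latticeFunctional_injective : Injective (latticeFunctional (n := n)) := by
  intro w w' h
  have hcoord := WithLp.toLp_injective 2 (innerSL_inj.mp h)
  exact funext fun i => Int.cast_injective (congrFun hcoord i)

lemma lfE_eq_affineFamily (v : Fin s → Fin n → ℤ) (lam : Fin s → ℝ) :
    lfE v lam = affineFamily (latticeFunctional ∘ v) lam := by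
  ext j u
  simp [lfE, affineFamily, latticeFunctional, PiLp.inner_apply]

lemma tropAll_eq_tropicalization (v : Fin s → Fin n → ℤ) (lam : Fin s → ℝ) :
    TropAll v lam = tropicalization (affineFamily (latticeFunctional ∘ v) lam) := by
  rw [← lfE_eq_affineFamily]
  rfl

end Lattice

lemma tendsto_update_sub {ι α : Type*} [DecidableEq ι] {l : Filter α} {δ : α → ℝ}
    (hδ : Tendsto δ l (𝓝 0)) (lam : ι → ℝ) (k : ι) :
    Tendsto (fun i => update lam k (lam k - δ i)) l (𝓝 lam) := by
  simpa using (tendsto_const_nhds (x := lam)).update k ((tendsto_const_nhds (x := lam k)).sub hδ)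

/-- Let `l_j(u) = ⟨u, v_j⟩ - λ_j` (`s ≥ 2`, pairwise distinct primitive `v_j`)
and let `δ^{(i)}` be a monotone real sequence converging to `0`. Let `T` be the tropicalization
of `{l_1, …, l_s}` and `T^{(i)}` that of `{l_1 + δ^{(i)}, l_2, …, l_s}`. Then `T` and each
`T^{(i)}` are nonempty and `T^{(i)} → T` in the Hausdorff distance sense: for every `ε > 0`
there is `N` such that for `i ≥ N` each point of `T` is within `ε` of `T^{(i)}` and conversely. -/
theorem statement7 {n s : ℕ} (hs : 2 ≤ s)
    (v : Fin s → Fin n → ℤ) (lam : Fin s → ℝ)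
    (hdist : Function.Injective v)
    (hprim : ∀ j, Primitive (v j))
    (δ : ℕ → ℝ) (hmono : Monotone δ ∨ Antitone δ)
    (hδ : Filter.Tendsto δ Filter.atTop (nhds 0)) :
    (TropAll v lam).Nonempty ∧
    (∀ i, (TropAll v (Function.update lam ⟨0, by omega⟩ (lam ⟨0, by omega⟩ - δ i))).Nonempty) ∧
    ∀ ε > (0 : ℝ), ∃ N : ℕ, ∀ i ≥ N,
      (∀ u₁ ∈ TropAll v lam,
        ∃ u₂ ∈ TropAll v (Function.update lam ⟨0, by omega⟩ (lam ⟨0, by omega⟩ - δ i)),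
          dist u₁ u₂ ≤ ε) ∧
      (∀ u₂ ∈ TropAll v (Function.update lam ⟨0, by omega⟩ (lam ⟨0, by omega⟩ - δ i)),
        ∃ u₁ ∈ TropAll v lam, dist u₁ u₂ ≤ ε) := by
  have : Nontrivial (Fin s) := Fin.nontrivial_iff_two_le.mpr hs
  simpa only [tropAll_eq_tropicalization, eventually_atTop] using
    statement7_general (latticeFunctional_injective.comp hdist) (tendsto_update_sub hδ lam _)
end
end

section
/- Let v_1, …, v_s ∈ ℤ^n (s ≥ 2) be pairwise distinct primitive vectors, λ_1, …, λ_s ∈ ℝ, and l_j(u) = ⟨u, v_j⟩ − λ_j. Let (δ^{(i)})_{i∈ℕ} be a monotonically decreasing sequence of positive real numbers converging to 0. Let T = {u ∈ ℝ^n : the minimum of {l_1(u), …, l_s(u)} is attained by at least two distinct indices} and T^{(i)} = {u ∈ ℝ^n : the minimum of {l_1(u) + δ^{(i)}, l_2(u), …, l_s(u)} is attained by at least two distinct indices}. Then for every ε > 0 there exists ι ∈ ℕ, independent of the point, such that for all i ≥ ι and every u_1 ∈ T there exists u_2 ∈ T^{(i)} with ‖u_1 − u_2‖ < ε. -/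
open scoped Classical

noncomputable section

/-!
Suppose `u` lies in the tropicalization for the constants `λ`, and replace `λ` by `μ`. Let `j` be an
index at which the new minimum at `u` is attained. One of the two indices tied at `u` before the
change is different from `j`; its function exceeds `l_j` at `u` by a gap `g ≤ 2 ‖λ - μ‖_∞`. Since
the slopes are distinct integer vectors, their difference has norm at least `1`, so this gap closes
somewhere in the closed ball of radius `g` about `u`. So `l_j` is minimal at `u` but not strictly
minimal throughout that ball, and by connectedness the minimum is a tie at some point of it.
-/

theorem exists_min_attained_twice_of_isPreconnected {X ι α : Type*} [TopologicalSpace X] [Finite ι]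
    [LinearOrder α] [TopologicalSpace α] [OrderClosedTopology α]
    {f : ι → X → α} {S : Set X} (hS : IsPreconnected S) (hf : ∀ i, ContinuousOn (f i) S)
    {a b : X} (ha : a ∈ S) (hb : b ∈ S) {j k : ι} (hkj : k ≠ j)
    (hmin : ∀ i, f j a ≤ f i a) (hle : f k b ≤ f j b) :
    ∃ x ∈ S, ∃ i, j ≠ i ∧ f j x = f i x ∧ ∀ m, f j x ≤ f m x := by
  have := Fintype.ofFinite ι
  have hk : k ∈ Finset.univ.erase j := by simp [hkj]
  let minOthers : X → α := fun x ↦ (Finset.univ.erase j).inf' ⟨k, hk⟩ (f · x)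
  have hcont : ContinuousOn minOthers S := .finset_inf'_apply _ fun i _ ↦ hf i
  have hle_a : f j a ≤ minOthers a := Finset.le_inf' _ _ fun i _ ↦ hmin i
  have hle_b : minOthers b ≤ f j b := (Finset.inf'_le _ hk).trans hle
  obtain ⟨x, hxS, hx⟩ := hS.intermediate_value₂ ha hb (hf j) hcont hle_a hle_b
  obtain ⟨i, hi, hix⟩ := Finset.exists_mem_eq_inf' ⟨k, hk⟩ (f · x)
  refine ⟨x, hxS, i, (Finset.ne_of_mem_erase hi).symm, hx.trans hix, fun m ↦ ?_⟩
  obtain rfl | hm := eq_or_ne m j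
  · exact le_rfl
  · exact hx.trans_le (Finset.inf'_le _ (by simp [hm]))

open RealInnerProductSpace in
theorem exists_inner_eq_and_norm_eq {E : Type*} [NormedAddCommGroup E] [InnerProductSpace ℝ E]
    {w : E} (hw : w ≠ 0) (c : ℝ) : ∃ x : E, ⟪w, x⟫ = c ∧ ‖x‖ = |c| / ‖w‖ := by
  have hnorm : ‖w‖ ≠ 0 := norm_ne_zero_iff.mpr hw
  refine ⟨(c / ‖w‖ ^ 2) • w, ?_, ?_⟩
  · rw [inner_smul_right, real_inner_self_eq_norm_sq]
    field_simp
  · rw [norm_smul, norm_div, norm_pow, norm_norm, Real.norm_eq_abs]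
    field_simp

theorem tendsto_update_sub_nhds {ι κ G : Type*} [DecidableEq ι] [AddGroup G] [TopologicalSpace G]
    [ContinuousSub G] (x : ι → G) (z : ι) {l : Filter κ} {δ : κ → G}
    (hδ : Filter.Tendsto δ l (nhds 0)) :
    Filter.Tendsto (fun i ↦ Function.update x z (x z - δ i)) l (nhds x) := by
  simpa using (tendsto_const_nhds (x := x)).update z (hδ.const_sub (x z))

/-- An integer vector regarded as a point of Euclidean space, so that the affine functions `lfE` can
be written with the inner product. -/
def latticePoint {ι : Type*} (w : ι → ℤ) : EuclideanSpace ℝ ι :=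
  WithLp.toLp 2 fun i ↦ (w i : ℝ)

theorem one_le_norm_latticePoint_sub {ι : Type*} [Fintype ι] {w w' : ι → ℤ} (h : w ≠ w') :
    1 ≤ ‖latticePoint w - latticePoint w'‖ := by
  obtain ⟨i, hi⟩ := Function.ne_iff.mp h
  have hcoord : (1 : ℝ) ≤ |(w i : ℝ) - w' i| := by
    exact_mod_cast Int.one_le_abs (sub_ne_zero.mpr hi)
  exact hcoord.trans (PiLp.norm_apply_le (latticePoint w - latticePoint w') i)

section Tropicalization

open RealInnerProductSpace

variable {n s : ℕ} {v : Fin s → Fin n → ℤ} {lam : Fin s → ℝ}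
  {u : EuclideanSpace ℝ (Fin n)} {j k : Fin s}

theorem lfE_eq_inner_sub (v : Fin s → Fin n → ℤ) (lam : Fin s → ℝ) (j : Fin s)
    (u : EuclideanSpace ℝ (Fin n)) : lfE v lam j u = ⟪latticePoint (v j), u⟫ - lam j := by
  simp [lfE, latticePoint, PiLp.inner_apply]

theorem continuous_lfE (v : Fin s → Fin n → ℤ) (lam : Fin s → ℝ) (j : Fin s) :
    Continuous (lfE v lam j) := by
  unfold lfE
  fun_prop

theorem abs_lfE_sub_lfE_le_dist (v : Fin s → Fin n → ℤ) (lam mu : Fin s → ℝ) (j : Fin s)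
    (u : EuclideanSpace ℝ (Fin n)) : |lfE v lam j u - lfE v mu j u| ≤ dist lam mu := by
  have hsub : lfE v lam j u - lfE v mu j u = mu j - lam j := by simp [lfE]
  rw [hsub, ← Real.dist_eq, dist_comm]
  exact dist_le_pi_dist lam mu j

theorem exists_lfE_eq_and_dist_le_abs_sub (hjk : v j ≠ v k) :
    ∃ x, lfE v lam j x = lfE v lam k x ∧ dist x u ≤ |lfE v lam k u - lfE v lam j u| := by
  have hnorm := one_le_norm_latticePoint_sub hjk
  have hne : latticePoint (v j) - latticePoint (v k) ≠ 0 :=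
    norm_pos_iff.mp (zero_lt_one.trans_le hnorm)
  obtain ⟨y, hinner, hy⟩ := exists_inner_eq_and_norm_eq hne (lfE v lam k u - lfE v lam j u)
  refine ⟨u + y, ?_, ?_⟩
  · simp only [lfE_eq_inner_sub, inner_add_right, inner_sub_left] at hinner ⊢
    linarith
  · rw [dist_self_add_left, hy]
    exact div_le_self (abs_nonneg _) hnorm

theorem exists_mem_TropAll_dist_le_sub (hjk : v j ≠ v k)
    (hmin : ∀ i, lfE v lam j u ≤ lfE v lam i u) :
    ∃ x ∈ TropAll v lam, dist u x ≤ lfE v lam k u - lfE v lam j u := by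
  obtain ⟨y, htie, hy⟩ := exists_lfE_eq_and_dist_le_abs_sub (lam := lam) (u := u) hjk
  rw [abs_of_nonneg (sub_nonneg.mpr (hmin k))] at hy
  obtain ⟨x, hx, i, hji, heq, hle⟩ := exists_min_attained_twice_of_isPreconnected
    (convex_closedBall u _).isPreconnected (fun i ↦ (continuous_lfE v lam i).continuousOn)
    (Metric.mem_closedBall_self (dist_nonneg.trans hy)) (Metric.mem_closedBall.mpr hy)
    (ne_of_apply_ne v hjk).symm hmin htie.ge
  exact ⟨x, ⟨j, i, hji, heq, hle⟩, Metric.mem_closedBall'.mp hx⟩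

theorem exists_ne_forall_lfE_le_of_mem_TropAll (hu : u ∈ TropAll v lam) (j : Fin s) :
    ∃ k, j ≠ k ∧ ∀ i, lfE v lam k u ≤ lfE v lam i u := by
  obtain ⟨a, b, hab, heq, hmin⟩ := hu
  obtain rfl | hja := eq_or_ne j a
  · exact ⟨b, hab, fun i ↦ heq.symm.trans_le (hmin i)⟩
  · exact ⟨a, hja, hmin⟩

theorem exists_mem_TropAll_dist_le_two_mul_dist (hv : Function.Injective v)
    (hu : u ∈ TropAll v lam) (mu : Fin s → ℝ) :
    ∃ x ∈ TropAll v mu, dist u x ≤ 2 * dist lam mu := by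
  have : Nonempty (Fin s) := ⟨hu.choose⟩
  obtain ⟨j, hj⟩ := Finite.exists_min fun i ↦ lfE v mu i u
  obtain ⟨k, hjk, hk⟩ := exists_ne_forall_lfE_le_of_mem_TropAll hu j
  obtain ⟨x, hx, hdist⟩ := exists_mem_TropAll_dist_le_sub (hv.ne hjk) hj
  refine ⟨x, hx, hdist.trans ?_⟩
  have hperturb_j := le_of_abs_le (abs_lfE_sub_lfE_le_dist v lam mu j u)
  have hperturb_k := neg_le_of_abs_le (abs_lfE_sub_lfE_le_dist v lam mu k u)
  linarith [hk j]

end Tropicalization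

theorem statement8_general {n s : ℕ} (v : Fin s → Fin n → ℤ) (lam : Fin s → ℝ)
    (hdist : Function.Injective v) :
    ∀ ε > (0 : ℝ), ∀ᶠ mu in nhds lam,
      ∀ u₁ ∈ TropAll v lam, ∃ u₂ ∈ TropAll v mu, dist u₁ u₂ < ε := by
  intro ε hε
  filter_upwards [Metric.ball_mem_nhds lam (half_pos hε)] with mu hmu u₁ hu₁
  obtain ⟨u₂, hu₂, hle⟩ := exists_mem_TropAll_dist_le_two_mul_dist hdist hu₁ mu
  have hclose : dist lam mu < ε / 2 := Metric.mem_ball'.mp hmu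
  exact ⟨u₂, hu₂, by linarith⟩

/-- With `l_j(u) = ⟨u, v_j⟩ - λ_j` (`s ≥ 2`, pairwise distinct primitive
`v_j`) and `δ^{(i)}` a monotonically decreasing sequence of positive reals tending to `0`, let
`T` be the tropicalization of `{l_1, …, l_s}` and `T^{(i)}` that of
`{l_1 + δ^{(i)}, l_2, …, l_s}`. For every `ε > 0` there exists `ι`, independent of the point,
such that for all `i ≥ ι` and every `u₁ ∈ T` there is `u₂ ∈ T^{(i)}` with `‖u₁ - u₂‖ < ε`. -/
theorem statement8 {n s : ℕ} (hs : 2 ≤ s)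
    (v : Fin s → Fin n → ℤ) (lam : Fin s → ℝ)
    (hdist : Function.Injective v)
    (hprim : ∀ j, Primitive (v j))
    (δ : ℕ → ℝ) (hpos : ∀ i, 0 < δ i) (hmono : Antitone δ)
    (hδ : Filter.Tendsto δ Filter.atTop (nhds 0)) :
    ∀ ε > (0 : ℝ), ∃ ι : ℕ, ∀ i ≥ ι,
      ∀ u₁ ∈ TropAll v lam,
        ∃ u₂ ∈ TropAll v (Function.update lam ⟨0, by omega⟩ (lam ⟨0, by omega⟩ - δ i)),
          dist u₁ u₂ < ε := by
  intro ε hε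
  exact Filter.eventually_atTop.mp
    ((tendsto_update_sub_nhds lam _ hδ).eventually (statement8_general v lam hdist ε hε))
end
end
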